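/- arXiv:math/0306232 — 2 statements merged into one kernel-verified Lean document; each statement's English description precedes it below -/
import Mathlib

section
/- Let p and q be coprime integers with 1 < q < p/2, and let r be an integer with 1 < r < q. Then w_{p,q,r,1} is not a primitive element of the free group F. -/
/-- The free group on two generators; `xx` and `yy` are the generators. -/
def xx : FreeGroup (Fin 2) := FreeGroup.of 0
def yy : FreeGroup (Fin 2) := FreeGroup.of 1

/-- The word `w_{p,q,r,m}` represented by the twisted torus knot
`T(p,q) + r T(m,n)` in the inside handlebody: writing `r = r̄ + α p`
with `0 ≤ r̄ < p`, it is `∏_{j=0}^{p-1} x^{m e_j} y` where `e_j = α+1`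
if `(j q mod p) < r̄` and `e_j = α` otherwise. -/
def w (p q r : ℕ) (m : ℤ) : FreeGroup (Fin 2) :=
  ((List.range p).map (fun j =>
    xx ^ (m * ((if j * q % p < r % p then r / p + 1 else r / p : ℕ) : ℤ)) * yy)).prod

/-- An element of the free group of rank two is primitive iff some automorphism
carries the generator `xx` to it. -/
def IsPrimitive (g : FreeGroup (Fin 2)) : Prop :=
  ∃ φ : FreeGroup (Fin 2) ≃* FreeGroup (Fin 2), φ xx = g

/-- The one-relator group `G_{a,b} = ⟨x, y | x^a y^b⟩`. -/
abbrev Gg (a b : ℤ) : Type := PresentedGroup ({xx ^ a * yy ^ b} : Set (FreeGroup (Fin 2)))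

/-- `g` is `(a,b)` Seifert-fibered if `F / ⟪g⟫ ≅ G_{a,b}`. -/
def IsSF (g : FreeGroup (Fin 2)) (a b : ℤ) : Prop :=
  Nonempty (PresentedGroup ({g} : Set (FreeGroup (Fin 2))) ≃* Gg a b)

/-!
Write `F → Perm R` for the affine action in which `xx` acts by `v ↦ a * v + 1` and `yy` by
`v ↦ b * v`. A homomorphism killing a primitive element has commutative image, so whenever a
primitive word acts trivially, `b = 1`. Taking `R` to be the quotient of `ℤ[T;T⁻¹]` by the Fox
derivative of a word with `r` letters `xx` and `N` letters `yy`, where `a = T ^ (-N)` and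
`b = T ^ r`, shows that this derivative divides `T ^ r - 1`. Its value at `1` is `r ≠ 0`, so its
exponents spread over less than `r`; comparing consecutive letters `xx`, the numbers of letters
`yy` between them are all `⌊N / r⌋` or `⌊N / r⌋ + 1`.

For `w p q r 1` these numbers are return times to `[0, r)` of the rotation by `q` modulo `p`, so
each point of `[0, r)` would be carried to another point of `[0, r)` by one of two translations
differing by `q`. When `r < q < p - r` this already fails for one of `0`, `r - 1` and `r - x`,
where `x` is the image of `0`.
-/

open LaurentPolynomial

/-- The word `∏_{j < N} x^{[P j]} y`: one letter `yy` for each `j < N`, preceded by a letter `xx`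
if `j` is marked by `P`. -/
def markedWord (P : ℕ → Prop) [DecidablePred P] (N : ℕ) : FreeGroup (Fin 2) :=
  ((List.range N).map fun j => (if P j then xx else 1) * yy).prod

section AffineAction

theorem IsPrimitive.commute_map {G : Type*} [Group G] {g : FreeGroup (Fin 2)}
    (hg : IsPrimitive g) (f : FreeGroup (Fin 2) →* G) (hf : f g = 1)
    (s t : FreeGroup (Fin 2)) : Commute (f s) (f t) := by
  obtain ⟨φ, rfl⟩ := hg
  have mem_zpowers (z) : f (φ z) ∈ Subgroup.zpowers (f (φ yy)) := by
    induction z using FreeGroup.induction_on with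
    | C1 => simp
    | of i =>
      fin_cases i
      · exact (congrArg (· ∈ Subgroup.zpowers (f (φ yy))) hf).mpr (one_mem _)
      · exact Subgroup.mem_zpowers _
    | inv_of i hi => simpa using hi
    | mul x y hx hy => simpa using mul_mem hx hy
  obtain ⟨m, hm⟩ := Subgroup.mem_zpowers_iff.1 (mem_zpowers (φ.symm s))
  obtain ⟨n, hn⟩ := Subgroup.mem_zpowers_iff.1 (mem_zpowers (φ.symm t))
  rw [MulEquiv.apply_symm_apply] at hm hn
  rw [← hm, ← hn]
  exact (Commute.refl _).zpow_zpow m n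

variable {R : Type*} [CommRing R]

/-- The action of the free group on a commutative ring by affine maps in which `xx` acts by
`v ↦ a * v + 1` and `yy` by `v ↦ b * v`. The translation part of the action of a word is its Fox
derivative with respect to `xx`, evaluated at `xx ↦ a`, `yy ↦ b`. -/
def affineAction (a b : Rˣ) : FreeGroup (Fin 2) →* Equiv.Perm R :=
  FreeGroup.lift ![Equiv.addRight 1 * a.mulLeft, b.mulLeft]

theorem affineAction_xx_apply (a b : Rˣ) (v : R) : affineAction a b xx v = a * v + 1 := by
  simp [affineAction, xx]

theorem affineAction_yy_apply (a b : Rˣ) (v : R) : affineAction a b yy v = b * v := by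
  simp [affineAction, yy]

variable {P : ℕ → Prop} [DecidablePred P] {N : ℕ}

theorem affineAction_markedWord_apply (a b : Rˣ) (v : R) :
    affineAction a b (markedWord P N) v =
      a ^ Nat.count P N * b ^ N * v +
        ∑ j ∈ Finset.range N with P j, (a ^ Nat.count P j * b ^ j : R) := by
  induction N generalizing v with
  | zero => simp [markedWord]
  | succ n ih =>
    have hsucc : markedWord P (n + 1) = markedWord P n * ((if P n then xx else 1) * yy) := by
      simp [markedWord, List.range_succ]
    rw [hsucc, map_mul, Equiv.Perm.mul_apply, ih, Nat.count_succ, Finset.sum_filter,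
      Finset.sum_filter, Finset.sum_range_succ]
    by_cases hn : P n
    · simp only [hn, if_true, map_mul, Equiv.Perm.mul_apply, affineAction_xx_apply,
        affineAction_yy_apply]
      ring
    · simp only [hn, if_false, one_mul, affineAction_yy_apply]
      ring

theorem IsPrimitive.eq_one_of_sum_eq_zero (hw : IsPrimitive (markedWord P N)) {a b : Rˣ}
    (hab : (a ^ Nat.count P N * b ^ N : R) = 1)
    (hsum : ∑ j ∈ Finset.range N with P j, (a ^ Nat.count P j * b ^ j : R) = 0) :
    (b : R) = 1 := by
  have hker : affineAction a b (markedWord P N) = 1 := by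
    ext v
    simp [affineAction_markedWord_apply, hab, hsum]
  have hcomm := congrArg (· 0) (hw.commute_map (affineAction a b) hker yy xx).eq
  simpa [affineAction_xx_apply, affineAction_yy_apply] using hcomm

end AffineAction

section LaurentPolynomial

variable {R : Type*} [CommRing R]

theorem coeff_T_apply (n k : ℤ) : (T n : R[T;T⁻¹]).coeff k = if n = k then 1 else 0 := by
  rw [T, AddMonoidAlgebra.coeff_single, Finsupp.single_apply]

theorem mem_Icc_of_coeff_T_sub_one_ne_zero {n k : ℤ} (hn : 0 ≤ n)
    (hk : (T n - 1 : R[T;T⁻¹]).coeff k ≠ 0) : k ∈ Set.Icc 0 n := by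
  rw [← T_zero, AddMonoidAlgebra.coeff_sub, Finsupp.sub_apply, coeff_T_apply, coeff_T_apply] at hk
  grind

theorem one_lt_card_support_of_eval₂_one_eq_zero {f : R[T;T⁻¹]} (hf : f ≠ 0)
    (hf1 : eval₂ (RingHom.id R) 1 f = 0) : 1 < f.coeff.support.card := by
  by_contra! hcard
  obtain ⟨n, c, hnc⟩ := Finsupp.card_support_le_one'.1 hcard
  have hmonomial : f = C c * T n := by
    rw [← single_eq_C_mul_T]
    exact AddMonoidAlgebra.ext hnc
  have hc : c = 0 := by simpa [hmonomial] using hf1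
  exact hf (by rw [hmonomial, hc, map_zero, zero_mul])

theorem lt_add_of_dvd_T_sub_one [IsDomain R] {f : R[T;T⁻¹]} {n i j : ℤ} (hn : 0 < n)
    (hf : f ∣ T n - 1) (hf1 : eval₂ (RingHom.id R) 1 f ≠ 0)
    (hi : f.coeff i ≠ 0) (hj : f.coeff j ≠ 0) : i < j + n := by
  obtain ⟨g, hg⟩ := hf
  have hg0 : g ≠ 0 := by
    rintro rfl
    have := congrArg (fun h => h.coeff n) hg
    simp [← T_zero, hn.ne] at this
  have hg1 : eval₂ (RingHom.id R) 1 g = 0 := by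
    have := congrArg (eval₂ (RingHom.id R) 1) hg
    simpa [hf1] using this.symm
  have mem_Icc {k l : ℤ} (hk : k ∈ f.coeff.support) (hl : l ∈ g.coeff.support)
      (hkl : UniqueAdd f.coeff.support g.coeff.support k l) : k + l ∈ Set.Icc 0 n := by
    refine mem_Icc_of_coeff_T_sub_one_ne_zero (R := R) hn.le ?_
    rw [hg, AddMonoidAlgebra.coeff_mul_add_of_uniqueAdd hkl]
    exact mul_ne_zero (Finsupp.mem_support_iff.1 hk) (Finsupp.mem_support_iff.1 hl)
  have hfs : f.coeff.support.Nonempty := ⟨i, Finsupp.mem_support_iff.2 hi⟩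
  have hcard := one_lt_card_support_of_eval₂_one_eq_zero hg0 hg1
  have hgs : g.coeff.support.Nonempty := Finset.card_pos.1 (by omega)
  have hmax := mem_Icc (Finset.max'_mem _ hfs) (Finset.max'_mem _ hgs) fun k l hk hl _ => by
    have := Finset.le_max' _ k hk
    have := Finset.le_max' _ l hl
    omega
  have hmin := mem_Icc (Finset.min'_mem _ hfs) (Finset.min'_mem _ hgs) fun k l hk hl _ => by
    have := Finset.min'_le _ k hk
    have := Finset.min'_le _ l hl
    omega
  have hgap := Finset.min'_lt_max'_of_card _ hcard
  have hi' := Finset.le_max' _ i (Finsupp.mem_support_iff.2 hi)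
  have hj' := Finset.min'_le _ j (Finsupp.mem_support_iff.2 hj)
  linarith [hmax.2, hmin.1]

end LaurentPolynomial

section Discrepancy

variable {P : ℕ → Prop} [DecidablePred P] {N : ℕ}

/-- The excess, scaled by `N`, of the expected number of marked `i < j` over the actual one when
`count P N` of the first `N` positions are marked. It is the exponent that the letter `xx` at
position `j` contributes to `foxDerivative P N`. -/
def discrepancy (P : ℕ → Prop) [DecidablePred P] (N j : ℕ) : ℤ :=
  Nat.count P N * j - N * Nat.count P j

theorem discrepancy_periodic (hP : Function.Periodic P N) :
    Function.Periodic (discrepancy P N) N := by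
  intro j
  have hcount : Nat.count P (j + N) = Nat.count P j + Nat.count P N := by
    simp only [Nat.count_add', hP _]
  simp only [discrepancy, hcount]
  push_cast
  ring

/-- The Fox derivative of `markedWord P N` with respect to `xx`, evaluated at `xx ↦ T ^ (-N)`
and `yy ↦ T ^ count P N`. -/
noncomputable def foxDerivative (P : ℕ → Prop) [DecidablePred P] (N : ℕ) : ℤ[T;T⁻¹] :=
  ∑ j ∈ Finset.range N with P j, T (discrepancy P N j)

theorem IsPrimitive.foxDerivative_dvd (hw : IsPrimitive (markedWord P N)) :
    foxDerivative P N ∣ T (Nat.count P N) - 1 := by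
  let π := Ideal.Quotient.mk (Ideal.span {foxDerivative P N})
  let a := Units.map π.toMonoidHom (unitOfInvertible (T (-N)))
  let b := Units.map π.toMonoidHom (unitOfInvertible (T (Nat.count P N)))
  have hmonomial (c j : ℕ) :
      (a ^ c * b ^ j : ℤ[T;T⁻¹] ⧸ Ideal.span {foxDerivative P N}) =
        π (T (Nat.count P N * j - N * c)) := by
    change π (T (-N)) ^ c * π (T (Nat.count P N)) ^ j = _
    rw [← map_pow, ← map_pow, ← map_mul, T_pow, T_pow, ← T_add]
    congr 2
    ring
  have hb : (b : ℤ[T;T⁻¹] ⧸ Ideal.span {foxDerivative P N}) = 1 := by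
    refine hw.eq_one_of_sum_eq_zero (a := a) ?_ ?_
    · rw [hmonomial, mul_comm, sub_self, T_zero, map_one]
    · simp only [hmonomial]
      rw [← map_sum, Ideal.Quotient.eq_zero_iff_mem]
      exact Ideal.mem_span_singleton_self _
  rw [← Ideal.mem_span_singleton, ← Ideal.Quotient.eq_zero_iff_mem, map_sub, map_one]
  exact sub_eq_zero.2 hb

theorem eval₂_one_foxDerivative :
    eval₂ (RingHom.id ℤ) 1 (foxDerivative P N) = Nat.count P N := by
  simp [foxDerivative, Nat.count_eq_card_filter_range]

theorem coeff_foxDerivative_discrepancy_ne_zero {j : ℕ} (hjN : j < N) (hj : P j) :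
    (foxDerivative P N).coeff (discrepancy P N j) ≠ 0 := by
  rw [foxDerivative, AddMonoidAlgebra.coeff_sum, Finsupp.finsetSum_apply]
  refine (Finset.sum_pos' (fun i _ => ?_) ⟨j, by simp [hjN, hj], ?_⟩).ne'
  · rw [coeff_T_apply]
    split_ifs <;> simp
  · simp

theorem IsPrimitive.discrepancy_lt (hw : IsPrimitive (markedWord P N))
    (hP : Function.Periodic P N) (hN : 0 < N) {i j : ℕ} (hi : P i) (hj : P j) :
    discrepancy P N i < discrepancy P N j + Nat.count P N := by
  have hcount : Nat.count P N ≠ 0 :=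
    Nat.count_ne_iff_exists.2 ⟨i % N, Nat.mod_lt i hN, (hP.map_mod_nat i).mpr hi⟩
  rw [← (discrepancy_periodic hP).map_mod_nat i, ← (discrepancy_periodic hP).map_mod_nat j]
  refine lt_add_of_dvd_T_sub_one (by positivity) hw.foxDerivative_dvd ?_
    (coeff_foxDerivative_discrepancy_ne_zero (Nat.mod_lt i hN) ((hP.map_mod_nat i).mpr hi))
    (coeff_foxDerivative_discrepancy_ne_zero (Nat.mod_lt j hN) ((hP.map_mod_nat j).mpr hj))
  rw [eval₂_one_foxDerivative]
  exact_mod_cast hcount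

theorem IsPrimitive.gap_eq (hw : IsPrimitive (markedWord P N)) (hP : Function.Periodic P N)
    (hN : 0 < N) {i j : ℕ} (hi : P i) (hj : P j) (hij : Nat.count P j = Nat.count P i + 1) :
    j = i + N / Nat.count P N ∨ j = i + (N / Nat.count P N + 1) := by
  have hij' : i ≤ j := (Nat.lt_of_count_lt_count (p := P) (by omega)).le
  obtain ⟨n, rfl⟩ := Nat.exists_eq_add_of_le hij'
  have hdiff : discrepancy P N (i + n) - discrepancy P N i = Nat.count P N * n - N := by
    simp only [discrepancy, hij]
    push_cast
    ring
  have hlower := hw.discrepancy_lt hP hN hi hj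
  have hupper := hw.discrepancy_lt hP hN hj hi
  have hr : 0 < Nat.count P N := by omega
  have hle : N / Nat.count P N < n + 1 := by
    rw [Nat.div_lt_iff_lt_mul hr]
    zify
    linarith
  have hge : n < N / Nat.count P N + 2 := by
    refine Nat.lt_of_mul_lt_mul_left (a := Nat.count P N) ?_
    have := Nat.lt_mul_div_succ N hr
    zify at this ⊢
    linarith
  omega

end Discrepancy

section Rotation

theorem exists_count_eq_add_one {P : ℕ → Prop} [DecidablePred P] {i j : ℕ} (hi : P i) (hj : P j)
    (hij : i < j) : ∃ k ≤ j, P k ∧ Nat.count P k = Nat.count P i + 1 := by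
  have hcount : Nat.count P i + 1 ≤ Nat.count P j := Nat.count_strict_mono hi hij
  have hcard (hfin : (Set.ofPred P).Finite) : Nat.count P i + 1 < hfin.toFinset.card :=
    hcount.trans_lt (Nat.count_lt_card hfin hj)
  refine ⟨Nat.nth P (Nat.count P i + 1), ?_, Nat.nth_mem _ hcard, Nat.count_nth hcard⟩
  rw [← Nat.nth_count hj]
  exact Nat.nth_le_nth' hcount fun hfin => Nat.count_lt_card hfin hj

variable {p q r : ℕ}

theorem exists_mul_mod_eq (hpq : p.Coprime q) {s : ℕ} (hs : s < p) : ∃ n < p, n * q % p = s := by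
  obtain ⟨n, hnp, hn⟩ := Nat.exists_mul_mod_eq_of_coprime s hpq.symm (by omega)
  exact ⟨n, hnp, by rw [mul_comm, hn, Nat.mod_eq_of_lt hs]⟩

theorem periodic_mul_mod_lt (p q r : ℕ) : Function.Periodic (fun j => j * q % p < r) p := by
  intro j
  simp [add_mul]

theorem count_mul_mod_lt (hpq : p.Coprime q) (hrp : r ≤ p) :
    Nat.count (fun j => j * q % p < r) p = r := by
  rw [Nat.count_eq_card_filter_range, ← Finset.card_range r]
  refine Finset.card_nbij (fun j => j * q % p) ?_ ?_ ?_
  · intro j hj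
    simpa using (Finset.mem_filter.1 hj).2
  · intro i hi j hj hij
    simp only [Finset.coe_filter, Finset.mem_range, Set.mem_ofPred_eq] at hi hj
    exact (Nat.ModEq.cancel_right_of_coprime hpq hij).eq_of_lt_of_lt hi.1 hj.1
  · intro s hs
    have hsr : s < r := by simpa using hs
    obtain ⟨j, hjp, rfl⟩ := exists_mul_mod_eq hpq (hsr.trans_le hrp)
    exact ⟨j, by simp [hjp, hsr], rfl⟩

theorem exists_consecutive_visits (hpq : p.Coprime q) (hr : 1 < r) (hrp : r ≤ p) {s : ℕ}
    (hs : s < r) :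
    ∃ i j, i * q % p = s ∧ j * q % p < r ∧ j * q % p ≠ s ∧
      Nat.count (fun k => k * q % p < r) j = Nat.count (fun k => k * q % p < r) i + 1 := by
  obtain ⟨i, hip, rfl⟩ := exists_mul_mod_eq hpq (hs.trans_le hrp)
  obtain ⟨j, hij, hji, hj⟩ : ∃ j, i < j ∧ j < i + p ∧ j * q % p < r := by
    obtain ⟨s, hsr, hs⟩ : ∃ s < r, s ≠ i * q % p :=
      ⟨if i * q % p = 0 then 1 else 0, by grind⟩
    obtain ⟨j, hjp, rfl⟩ := exists_mul_mod_eq hpq (hsr.trans_le hrp)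
    rcases lt_trichotomy i j with hij | rfl | hji
    · exact ⟨j, hij, by omega, hsr⟩
    · exact absurd rfl hs
    · exact ⟨j + p, by omega, by omega, by simpa [add_mul] using hsr⟩
  obtain ⟨k, hkj, hk, hcount⟩ := exists_count_eq_add_one (P := fun k => k * q % p < r) hs hj hij
  have hik : i < k := Nat.lt_of_count_lt_count (p := fun k => k * q % p < r) (by omega)
  refine ⟨i, k, rfl, hk, fun hki => ?_, hcount⟩
  have hmod : i ≡ k [MOD p] := (Nat.ModEq.cancel_right_of_coprime hpq hki).symm
  have hdvd : p ∣ k - i := (Nat.modEq_iff_dvd' hik.le).1 hmod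
  have := Nat.le_of_dvd (by omega) hdvd
  omega

theorem eq_of_intCast_zmod_eq {p : ℕ} {a b : ℤ} (h : (a : ZMod p) = b) (hab : |b - a| < p) :
    a = b :=
  (sub_eq_zero.1 (Int.eq_zero_of_abs_lt_dvd
    ((ZMod.intCast_eq_intCast_iff_dvd_sub a b p).1 h) hab)).symm

theorem exists_translates_notMem_Ico {p : ℕ} {q r : ℤ} (hr : 0 < r) (hrq : r < q)
    (hqr : q + r < p) (t : ZMod p) :
    ∃ s ∈ Set.Ico 0 r, ∀ s' ∈ Set.Ico 0 r, s' ≠ s →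
      ¬((s' : ZMod p) = s + t ∨ (s' : ZMod p) = s + (t + q)) := by
  have add_eq_add {u : ZMod p} {a a' b b' : ℤ} (ha : (a' : ZMod p) = a + u)
      (hb : (b' : ZMod p) = b + u) (hab : |b' + a - (a' + b)| < p) : a' + b = b' + a :=
    eq_of_intCast_zmod_eq (by push_cast; linear_combination ha - hb) hab
  by_contra! H
  obtain ⟨x, ⟨hx0, hxr⟩, hx, hxt⟩ := H 0 ⟨le_rfl, hr⟩
  obtain ⟨y, ⟨hy0, hyr⟩, hy, hyt⟩ := H (r - 1) ⟨by omega, by omega⟩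
  obtain ⟨z, ⟨hz0, hzr⟩, hz, hzt⟩ := H (r - x) ⟨by omega, by omega⟩
  have not_same_x {u : ZMod p} (hxu : (x : ZMod p) = (0 : ℤ) + u)
      (hzu : (z : ZMod p) = (r - x : ℤ) + u) : False := by
    have := add_eq_add hxu hzu (abs_lt.2 ⟨by omega, by omega⟩)
    omega
  have not_same_xy {u : ZMod p} (hxu : (x : ZMod p) = (0 : ℤ) + u)
      (hyu : (y : ZMod p) = (r - 1 : ℤ) + u) : False := by
    have := add_eq_add hxu hyu (abs_lt.2 ⟨by omega, by omega⟩)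
    omega
  have not_same_y (hxy : r < x + (r - 1 - y)) {u : ZMod p}
      (hyu : (y : ZMod p) = (r - 1 : ℤ) + u) (hzu : (z : ZMod p) = (r - x : ℤ) + u) : False := by
    have := add_eq_add hyu hzu (abs_lt.2 ⟨by omega, by omega⟩)
    omega
  rcases hxt with hxt | hxt <;> rcases hyt with hyt | hyt
  · exact not_same_xy hxt hyt
  · have hxy : x + (r - 1 - y) = p - q := by
      refine eq_of_intCast_zmod_eq (p := p) ?_ (abs_lt.2 ⟨by omega, by omega⟩)
      push_cast [ZMod.natCast_self] at hxt hyt ⊢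
      linear_combination hxt - hyt
    exact hzt.elim (not_same_x hxt) (not_same_y (by omega) hyt)
  · have hxy : x + (r - 1 - y) = q := by
      refine eq_of_intCast_zmod_eq (p := p) ?_ (abs_lt.2 ⟨by omega, by omega⟩)
      push_cast at hxt hyt ⊢
      linear_combination hxt - hyt
    exact hzt.elim (not_same_y (by omega) hyt) (not_same_x hxt)
  · exact not_same_xy hxt hyt

theorem w_one_eq_markedWord (hrp : r < p) :
    w p q r 1 = markedWord (fun j => j * q % p < r) p := by
  unfold w markedWord
  congr 2
  funext j
  rw [Nat.mod_eq_of_lt hrp, Nat.div_eq_of_lt hrp]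
  split_ifs <;> simp

end Rotation

theorem stmt4_general {p q r : ℕ} (hpq : Nat.Coprime p q) (hr : 1 < r) (hrq : r < q)
    (hqr : q + r < p) : ¬ IsPrimitive (w p q r 1) := by
  rw [w_one_eq_markedWord (by omega)]
  intro hw
  have hcount := count_mul_mod_lt hpq (by omega : r ≤ p)
  obtain ⟨s, ⟨hs0, hsr⟩, hs⟩ := exists_translates_notMem_Ico (p := p) (q := q) (r := r)
    (by omega) (by omega) (by omega) ((p / r : ℕ) * q : ZMod p)
  lift s to ℕ using hs0
  obtain ⟨i, j, rfl, hj, hji, hij⟩ :=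
    exists_consecutive_visits hpq hr (by omega) (Int.ofNat_lt.1 hsr)
  refine hs (j * q % p : ℕ) ⟨by omega, by omega⟩ (by omega) ?_
  have hgap := hw.gap_eq (periodic_mul_mod_lt p q r) (by omega) (Int.ofNat_lt.1 hsr) hj hij
  rw [hcount] at hgap
  simp only [Int.cast_natCast, ZMod.natCast_mod]
  rcases hgap with rfl | rfl
  · exact Or.inl (by push_cast; ring)
  · exact Or.inr (by push_cast; ring)

/-- For coprime `p, q` with `1 < q < p/2` and `1 < r < q`, the word
`w_{p,q,r,1}` is not primitive. -/
theorem stmt4 (p q r : ℕ) (hpq : Nat.Coprime p q)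
    (hq1 : 1 < q) (hq2 : 2 * q < p) (hr1 : 1 < r) (hr2 : r < q) :
    ¬ IsPrimitive (w p q r 1) :=
  stmt4_general hpq hr1 hr2 (by omega)
end

section
/- Let p and q be coprime integers with 1 ≤ q < p/2, and let β be an integer with 1 ≤ β and βq < p. Then both w_{p,q,βq,1} and w_{p,q,p−βq,1} are (β, p−βq) Seifert-fibered; that is, the quotient of F by the normal closure of either element is isomorphic to G_{β, p−βq} = ⟨x, y | x^β y^{p−βq}⟩. -/
/-!
After the automorphism `x ↦ x y⁻¹`, `y ↦ y` the words code the orbit of `0` under the rotation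
`v ↦ v + q` of `ℤ/p` by an arc (letter `x`) and its complement (letter `y`). Up to conjugacy such a
word does not depend on the starting point, so the arcs `[0, β q)` and `[0, p - β q)` give the same
word up to exchanging `x` and `y`, and it suffices to treat the first.

Write `A = x ^ β`. Starting at `0` and at `-1` one reads `A y T` and `y A T` with the same tail `T`,
because only the residues `0` and `β q` change their letter; so the relator forces `A` and `y` to
commute. The word is also a product of `q` blocks `A y ^ k`, one for each turn around the circle,
so it becomes `A ^ q y ^ (p - β q)` once `A` and `y` commute. Since `q` and `p - β q` are coprime,
`A` and `y` are then `z ^ (β q - p)` and `z ^ q` for a single element `z`, and the quotient is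
`⟨x, z | x ^ β z ^ (p - β q)⟩`.
-/

section ListProducts

variable {M : Type*} [Monoid M]

theorem prod_range_add (f : ℕ → M) (m n : ℕ) :
    ((List.range (m + n)).map f).prod =
      ((List.range m).map f).prod * ((List.range n).map fun j => f (m + j)).prod := by
  rw [List.range_add, List.map_append, List.prod_append, List.map_map]
  rfl

theorem prod_range_ite_lt {m n : ℕ} (hmn : m ≤ n) (a b : M) :
    ((List.range n).map fun j => if j < m then a else b).prod = a ^ m * b ^ (n - m) := by
  obtain ⟨k, rfl⟩ := Nat.exists_eq_add_of_le hmn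
  have left : (List.range m).map (fun j => if j < m then a else b) = List.replicate m a :=
    List.eq_replicate_iff.2 ⟨by simp, by simp +contextual⟩
  have right : (List.range k).map (fun j => if m + j < m then a else b) = List.replicate k b :=
    List.eq_replicate_iff.2 ⟨by simp, by simp⟩
  rw [prod_range_add, left, right, List.prod_replicate, List.prod_replicate,
    Nat.add_sub_cancel_left]

end ListProducts

section RotationLetters

variable {α : Type*} {p q r β : ℕ} {a b : α}

/-- The `j`-th letter of the coding of the orbit of `s` under the rotation `v ↦ v + q` of `ℤ/p`:
it is `a` if the residue of `j * q + s` lies in `[0, r)` and `b` otherwise. -/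
def rotationLetter (p q r s : ℕ) (a b : α) (j : ℕ) : α :=
  if (j * q + s) % p < r then a else b

theorem rotationLetter_sub_one {j : ℕ} (h0 : j * q % p ≠ 0) (hr : j * q % p ≠ r) :
    rotationLetter p q r (p - 1) a b j = rotationLetter p q r 0 a b j := by
  obtain rfl | hp := p.eq_zero_or_pos
  · rfl
  have hv : j * q % p < p := Nat.mod_lt _ hp
  have hpred : (j * q + (p - 1)) % p = j * q % p - 1 := by
    rw [← Nat.mod_add_mod, Nat.mod_eq_sub_mod (by omega), Nat.mod_eq_of_lt (by omega)]
    omega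
  simp only [rotationLetter, hpred, add_zero]
  exact if_congr (by omega) rfl rfl

/-- The first position `j` at which `j * q` has completed `i` turns around `ℤ/p`. -/
def turnStart (p q i : ℕ) : ℕ := (i * p) ⌈/⌉ q

theorem mul_le_turnStart_mul (hq : 1 ≤ q) (i : ℕ) : i * p ≤ turnStart p q i * q := by
  rw [mul_comm _ q]
  exact le_smul_ceilDiv (α := ℕ) hq

theorem turnStart_mul_lt (hq : 1 ≤ q) (i : ℕ) : turnStart p q i * q < i * p + q := by
  have := Nat.div_mul_le_self (i * p + q - 1) q
  rw [turnStart, Nat.ceilDiv_eq_add_pred_div]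
  omega

theorem turnStart_add_le (hq : 1 ≤ q) (hβq : β * q ≤ p) (i : ℕ) :
    turnStart p q i + β ≤ turnStart p q (i + 1) := by
  have hstart := turnStart_mul_lt (p := p) hq i
  have hend := mul_le_turnStart_mul (p := p) hq (i + 1)
  by_contra! hlt
  have := Nat.mul_le_mul_right q (Nat.succ_le_of_lt hlt)
  rw [Nat.succ_mul, add_mul] at this
  rw [Nat.succ_mul] at hend
  omega

theorem rotationLetter_turnStart_add (hq : 1 ≤ q) {i j : ℕ}
    (hj : turnStart p q i + j < turnStart p q (i + 1)) :
    rotationLetter p q (β * q) 0 a b (turnStart p q i + j) = if j < β then a else b := by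
  have hlow := mul_le_turnStart_mul (p := p) hq i
  have hhigh := turnStart_mul_lt (p := p) hq i
  have hnext : (turnStart p q i + j) * q < (i + 1) * p := by
    have := Nat.mul_le_mul_right q (Nat.succ_le_of_lt hj)
    have := turnStart_mul_lt (p := p) hq (i + 1)
    rw [Nat.succ_mul] at *
    omega
  rw [add_mul, Nat.succ_mul] at hnext
  obtain ⟨v, hv⟩ := Nat.exists_eq_add_of_le hlow
  have hmod : (turnStart p q i + j) * q % p = v + j * q := by
    rw [add_mul, hv, add_assoc, Nat.mul_add_mod_self_right, Nat.mod_eq_of_lt (by omega)]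
  have hmem : v + j * q < β * q ↔ j < β := by
    constructor
    · intro h
      exact lt_of_mul_lt_mul_right (by omega) q.zero_le
    · intro h
      have := Nat.mul_le_mul_right q (Nat.succ_le_of_lt h)
      rw [Nat.succ_mul] at this
      omega
  simp only [rotationLetter, add_zero, hmod, hmem]

end RotationLetters

section RotationWords

variable {H : Type*} [Group H] {p q r s β : ℕ} {a b : H}

/-- The coding word, of length `p`, of the orbit of `s` under the rotation `v ↦ v + q` of `ℤ/p`
with respect to the arc `[0, r)`. Up to the substitution `a = x y`, `b = y` the words starting
at `s = 0` are the `w p q r 1` with `r ≤ p`. -/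
def rotationWord (p q r s : ℕ) (a b : H) : H :=
  ((List.range p).map (rotationLetter p q r s a b)).prod

theorem map_rotationWord {K F : Type*} [Group K] [FunLike F H K] [MonoidHomClass F H K] (φ : F) :
    φ (rotationWord p q r s a b) = rotationWord p q r s (φ a) (φ b) := by
  simp only [rotationWord, map_list_prod, List.map_map]
  refine congrArg List.prod (List.map_congr_left fun j _ => ?_)
  exact apply_ite φ _ _ _

theorem rotationWord_congr {s t : ℕ} (h : s ≡ t [MOD p]) :
    rotationWord p q r s a b = rotationWord p q r t a b := by
  refine congrArg List.prod (List.map_congr_left fun j _ => ?_)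
  simp only [rotationLetter, show (j * q + s) % p = (j * q + t) % p from h.add_left _]

theorem isConj_rotationWord_add_step :
    IsConj (rotationWord p q r s a b) (rotationWord p q r (s + q) a b) := by
  set f := rotationLetter p q r s a b with hf
  have hperiod : f p = f 0 := by simp [hf, rotationLetter]
  have hshift : rotationWord p q r (s + q) a b = ((List.range p).map fun j => f (j + 1)).prod := by
    refine congrArg List.prod (List.map_congr_left fun j _ => ?_)
    simp only [hf, rotationLetter, show j * q + (s + q) = (j + 1) * q + s by ring]
  have hrotate : rotationWord p q r s a b * f 0 = f 0 * rotationWord p q r (s + q) a b := by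
    rw [hshift, ← List.prod_range_succ', List.prod_range_succ, hperiod, rotationWord]
  exact isConj_iff.2 ⟨(f 0)⁻¹, by rw [mul_assoc, inv_inv, hrotate, inv_mul_cancel_left]⟩

theorem isConj_rotationWord_add_mul_step (k : ℕ) :
    IsConj (rotationWord p q r s a b) (rotationWord p q r (s + k * q) a b) := by
  induction k with
  | zero => rw [zero_mul, add_zero]
  | succ k ih =>
    rw [Nat.succ_mul, ← Nat.add_assoc]
    exact ih.trans isConj_rotationWord_add_step

theorem isConj_rotationWord_zero (hpq : p.Coprime q) (s : ℕ) :
    IsConj (rotationWord p q r 0 a b) (rotationWord p q r s a b) := by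
  obtain rfl | hp := eq_or_ne p 0
  · exact IsConj.refl _
  obtain ⟨k, -, hk⟩ := Nat.exists_mul_mod_eq_of_coprime s hpq.symm hp
  have hks : 0 + k * q ≡ s [MOD p] := by rw [zero_add, mul_comm]; exact hk
  rw [← rotationWord_congr hks]
  exact isConj_rotationWord_add_mul_step k

theorem rotationWord_swap (hr : r ≤ p) :
    rotationWord p q r r b a = rotationWord p q (p - r) 0 a b := by
  refine congrArg List.prod (List.map_congr_left fun j hj => ?_)
  have hv : j * q % p < p := Nat.mod_lt _ (Nat.zero_lt_of_lt (List.mem_range.1 hj))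
  have hmem : (j * q + r) % p < r ↔ ¬ j * q % p < p - r := by
    rw [← Nat.mod_add_mod]
    by_cases h : j * q % p < p - r
    · rw [Nat.mod_eq_of_lt (by omega)]; omega
    · rw [Nat.mod_eq_sub_mod (by omega), Nat.mod_eq_of_lt (by omega)]; omega
  simp only [rotationLetter, hmem, ite_not, add_zero]

theorem prod_range_rotationLetter_zero (hq : 1 ≤ q) (hβq : β * q < p) :
    ((List.range (β + 1)).map (rotationLetter p q (β * q) 0 a b)).prod = a ^ β * b := by
  have hletter : ∀ j ∈ List.range (β + 1),
      rotationLetter p q (β * q) 0 a b j = if j < β then a else b := fun j hj => by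
    have hj : j * q ≤ β * q := Nat.mul_le_mul_right q (Nat.lt_succ_iff.1 (List.mem_range.1 hj))
    simp only [rotationLetter, add_zero, Nat.mod_eq_of_lt (hj.trans_lt hβq),
      Nat.mul_lt_mul_right hq]
  rw [List.map_congr_left hletter, prod_range_ite_lt (Nat.le_add_right β 1),
    Nat.add_sub_cancel_left, pow_one]

theorem prod_range_rotationLetter_sub_one (hq : 1 ≤ q) (hβq : β * q < p) :
    ((List.range (β + 1)).map (rotationLetter p q (β * q) (p - 1) a b)).prod = b * a ^ β := by
  have hfirst : rotationLetter p q (β * q) (p - 1) a b 0 = b := by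
    simp only [rotationLetter, zero_mul, zero_add]
    rw [Nat.mod_eq_of_lt (by omega), if_neg (by omega)]
  have hletter : ∀ c ∈ (List.range β).map
      (fun j => rotationLetter p q (β * q) (p - 1) a b (j + 1)), c = a := by
    simp only [List.mem_map, List.mem_range, forall_exists_index, and_imp]
    rintro _ j hj rfl
    have hj : (j + 1) * q ≤ β * q := Nat.mul_le_mul_right q hj
    have hpos : 1 ≤ (j + 1) * q := Nat.mul_pos j.succ_pos hq
    rw [rotationLetter, Nat.mod_eq_sub_mod (by omega), Nat.mod_eq_of_lt (by omega),
      if_pos (by omega)]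
  rw [List.prod_range_succ', hfirst, List.prod_eq_pow_card _ a hletter, List.length_map,
    List.length_range]

theorem exists_rotationWord_eq_mul (hpq : p.Coprime q) (hq : 1 ≤ q) (hβq : β * q < p) :
    ∃ t : H, rotationWord p q (β * q) 0 a b = a ^ β * b * t ∧
      rotationWord p q (β * q) (p - 1) a b = b * a ^ β * t := by
  have hβp : β < p := (Nat.le_mul_of_pos_right β hq).trans_lt hβq
  obtain ⟨m, hm⟩ := Nat.exists_eq_add_of_le (Nat.succ_le_of_lt hβp)
  have hinj : ∀ {j k : ℕ}, j < p → k < p → j * q ≡ k * q [MOD p] → j = k := fun hj hk h =>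
    (Nat.ModEq.cancel_right_of_coprime hpq h).eq_of_lt_of_lt hj hk
  have htail : ∀ j ∈ List.range m, rotationLetter p q (β * q) (p - 1) a b (β + 1 + j) =
      rotationLetter p q (β * q) 0 a b (β + 1 + j) := fun j hj => by
    have hj := List.mem_range.1 hj
    refine rotationLetter_sub_one (fun h => ?_) (fun h => ?_)
    · have := hinj (j := β + 1 + j) (k := 0) (by omega) (by omega) (by simpa [Nat.ModEq] using h)
      omega
    · have := hinj (j := β + 1 + j) (k := β) (by omega) hβp
        (by rw [Nat.ModEq, h, Nat.mod_eq_of_lt hβq])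
      omega
  have hsplit : ∀ s, rotationWord p q (β * q) s a b =
      ((List.range (β + 1)).map (rotationLetter p q (β * q) s a b)).prod *
        ((List.range m).map fun j => rotationLetter p q (β * q) s a b (β + 1 + j)).prod :=
    fun s => by
    rw [← prod_range_add, ← Nat.succ_eq_add_one, ← hm, rotationWord]
  refine ⟨((List.range m).map fun j => rotationLetter p q (β * q) 0 a b (β + 1 + j)).prod,
    ?_, ?_⟩
  · rw [hsplit, prod_range_rotationLetter_zero hq hβq]
  · rw [hsplit, prod_range_rotationLetter_sub_one hq hβq, List.map_congr_left htail]

theorem commute_of_rotationWord_eq_one (hpq : p.Coprime q) (hq : 1 ≤ q) (hβq : β * q < p)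
    (h : rotationWord p q (β * q) 0 a b = 1) : Commute (a ^ β) b := by
  obtain ⟨t, h0, h1⟩ := exists_rotationWord_eq_mul (a := a) (b := b) hpq hq hβq
  have hpred : rotationWord p q (β * q) (p - 1) a b = 1 :=
    isConj_one_right.1 (h ▸ isConj_rotationWord_zero hpq (p - 1))
  exact mul_right_cancel (h0.symm.trans (h.trans (hpred.symm.trans h1)))

theorem prod_range_turnStart (hq : 1 ≤ q) (hβq : β * q ≤ p) (hab : Commute (a ^ β) b) (i : ℕ) :
    ((List.range (turnStart p q i)).map (rotationLetter p q (β * q) 0 a b)).prod =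
      (a ^ β) ^ i * b ^ ((turnStart p q i : ℤ) - β * i) := by
  induction i with
  | zero => simp [turnStart]
  | succ i ih =>
    obtain ⟨k, hk⟩ := Nat.exists_eq_add_of_le (turnStart_add_le hq hβq i)
    have hturn : ((List.range (β + k)).map fun j =>
        rotationLetter p q (β * q) 0 a b (turnStart p q i + j)).prod = a ^ β * b ^ k := by
      have hletter : ∀ j ∈ List.range (β + k),
          rotationLetter p q (β * q) 0 a b (turnStart p q i + j) = if j < β then a else b :=
        fun j hj => rotationLetter_turnStart_add hq (by have := List.mem_range.1 hj; omega)
      rw [List.map_congr_left hletter, prod_range_ite_lt (by omega), Nat.add_sub_cancel_left]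
    calc ((List.range (turnStart p q (i + 1))).map (rotationLetter p q (β * q) 0 a b)).prod
      _ = (a ^ β) ^ i * b ^ ((turnStart p q i : ℤ) - β * i) * (a ^ β * b ^ k) := by
        rw [hk, add_assoc, prod_range_add, ih, hturn]
      _ = (a ^ β) ^ i * a ^ β * (b ^ ((turnStart p q i : ℤ) - β * i) * b ^ (k : ℤ)) := by
        rw [zpow_natCast]
        exact ((hab.zpow_right _).symm).mul_mul_mul_comm _ _
      _ = (a ^ β) ^ (i + 1) * b ^ ((turnStart p q (i + 1) : ℤ) - β * (i + 1 : ℕ)) := by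
        rw [← pow_succ, ← zpow_add, hk]
        congr 2
        push_cast
        ring

theorem rotationWord_eq_of_commute (hq : 1 ≤ q) (hβq : β * q ≤ p) (hab : Commute (a ^ β) b) :
    rotationWord p q (β * q) 0 a b = (a ^ β) ^ q * b ^ ((p : ℤ) - β * q) := by
  have hlast : turnStart p q q = p := smul_ceilDiv (α := ℕ) (β := ℕ) hq p
  simpa only [rotationWord, hlast] using prod_range_turnStart hq hβq hab q

end RotationWords

section CoprimeExponents

variable {H : Type*} [Group H] {g h : H} {k l u v : ℤ}

theorem zpow_neg_mul_zpow_zpow_eq (hgh : Commute g h) (hrel : g ^ k * h ^ l = 1)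
    (huv : u * k + v * l = 1) : (g ^ (-v) * h ^ u) ^ k = h :=
  calc (g ^ (-v) * h ^ u) ^ k
    _ = (g ^ k) ^ (-v) * (h ^ l) ^ (-v) * h := by
      rw [(hgh.zpow_zpow _ _).mul_zpow, ← zpow_mul, ← zpow_mul, ← zpow_mul, ← zpow_mul, mul_assoc,
        ← zpow_add_one, mul_comm (-v) k]
      congr 2
      linear_combination huv
    _ = h := by rw [← (hgh.zpow_zpow _ _).mul_zpow, hrel, one_zpow, one_mul]

theorem mul_zpow_neg_mul_zpow_zpow_eq_one (hgh : Commute g h) (hrel : g ^ k * h ^ l = 1)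
    (huv : u * k + v * l = 1) : g * (g ^ (-v) * h ^ u) ^ l = 1 :=
  calc g * (g ^ (-v) * h ^ u) ^ l
    _ = (g ^ k) ^ u * (h ^ l) ^ u := by
      rw [(hgh.zpow_zpow _ _).mul_zpow, ← zpow_mul, ← zpow_mul, ← zpow_mul, ← zpow_mul, ← mul_assoc,
        ← zpow_one_add, mul_comm u l]
      congr 2
      linear_combination -huv
    _ = 1 := by rw [← (hgh.zpow_zpow _ _).mul_zpow, hrel, one_zpow]

end CoprimeExponents

section SeifertFibered

variable {p q r β : ℕ} {a b : ℤ} {g h : FreeGroup (Fin 2)}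

theorem IsSF.map_mulEquiv (hg : IsSF g a b) (e : FreeGroup (Fin 2) ≃* FreeGroup (Fin 2)) :
    IsSF (e g) a b := by
  obtain ⟨ψ⟩ := hg
  refine ⟨(QuotientGroup.congr (Subgroup.normalClosure {g}) (Subgroup.normalClosure {e g}) e
    ?_).symm.trans ψ⟩
  rw [Subgroup.map_normalClosure _ _ e.surjective, Set.image_singleton]
  rfl

theorem IsSF.of_isConj (hg : IsSF g a b) (hgh : IsConj g h) : IsSF h a b := by
  have hclosure : Subgroup.normalClosure {g} = Subgroup.normalClosure {h} := by
    simp only [Subgroup.normalClosure, Group.conjugatesOfSet, Set.biUnion_singleton,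
      hgh.conjugatesOf_eq]
  obtain ⟨ψ⟩ := hg
  exact ⟨(QuotientGroup.quotientMulEquivOfEq hclosure).symm.trans ψ⟩

theorem lift_xx {H : Type*} [Group H] (f : Fin 2 → H) : FreeGroup.lift f xx = f 0 :=
  FreeGroup.lift_apply_of

theorem lift_yy {H : Type*} [Group H] (f : Fin 2 → H) : FreeGroup.lift f yy = f 1 :=
  FreeGroup.lift_apply_of

theorem rotationWord_zpow_eq_one {H : Type*} [Group H] {x y : H} (hq : 1 ≤ q) (hβq : β * q ≤ p)
    (hxy : x ^ β * y ^ ((p : ℤ) - β * q) = 1) :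
    rotationWord p q (β * q) 0 x (y ^ (q : ℤ)) = 1 := by
  have hx : x ^ β = (y ^ ((p : ℤ) - β * q))⁻¹ := eq_inv_of_mul_eq_one_left hxy
  have hcomm : Commute (x ^ β) (y ^ (q : ℤ)) :=
    hx ▸ (Commute.zpow_zpow_self y _ _).inv_left
  rw [rotationWord_eq_of_commute hq hβq hcomm, hx, ← zpow_natCast, inv_zpow, zpow_comm,
    inv_mul_cancel]

theorem pow_mul_zpow_eq_one_of_Gg (m : ℕ) (n : ℤ) :
    (PresentedGroup.of 0 : Gg m n) ^ m * (PresentedGroup.of 1 : Gg m n) ^ n = 1 := by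
  have := PresentedGroup.one_of_mem (rels := {xx ^ (m : ℤ) * yy ^ n}) rfl
  rwa [map_mul, map_zpow, map_zpow, zpow_natCast] at this

theorem isSF_rotationWord (hpq : p.Coprime q) (hq : 1 ≤ q) (hβq : β * q < p) :
    IsSF (rotationWord p q (β * q) 0 xx yy) β ((p : ℤ) - β * q) := by
  set n : ℤ := (p : ℤ) - β * q
  set W := rotationWord p q (β * q) 0 xx yy with hW
  obtain ⟨u, v, huv⟩ : IsCoprime (q : ℤ) n := by
    have := (Nat.isCoprime_iff_coprime.2 hpq.symm).add_mul_right_right (-(β : ℤ))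
    rwa [neg_mul, ← sub_eq_add_neg] at this
  let X : PresentedGroup {W} := .of 0
  let Y : PresentedGroup {W} := .of 1
  let x : Gg β n := .of 0
  let y : Gg β n := .of 1
  have hXY : rotationWord p q (β * q) 0 X Y = 1 :=
    (map_rotationWord (PresentedGroup.mk {W})).symm.trans (PresentedGroup.one_of_mem rfl)
  have hxy : x ^ β * y ^ n = 1 := pow_mul_zpow_eq_one_of_Gg β n
  have hcomm : Commute (X ^ β) Y := commute_of_rotationWord_eq_one hpq hq hβq hXY
  have hrel : (X ^ β) ^ (q : ℤ) * Y ^ n = 1 := by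
    rw [zpow_natCast, ← rotationWord_eq_of_commute hq hβq.le hcomm, hXY]
  let Z := (X ^ β) ^ (-v) * Y ^ u
  have hZq : Z ^ (q : ℤ) = Y := zpow_neg_mul_zpow_zpow_eq hcomm hrel huv
  have hZn : X ^ β * Z ^ n = 1 := mul_zpow_neg_mul_zpow_zpow_eq_one hcomm hrel huv
  have hy : (x ^ β) ^ (-v) * (y ^ (q : ℤ)) ^ u = y := by
    rw [eq_inv_of_mul_eq_one_left hxy, inv_zpow', neg_neg, ← zpow_mul, ← zpow_mul, ← zpow_add,
      show n * v + q * u = 1 by linear_combination huv, zpow_one]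
  have hf : ∀ c ∈ ({W} : Set _), FreeGroup.lift ![x, y ^ (q : ℤ)] c = 1 := by
    rintro _ rfl
    rw [hW, map_rotationWord, lift_xx, lift_yy]
    exact rotationWord_zpow_eq_one hq hβq.le hxy
  have hg : ∀ c ∈ ({xx ^ (β : ℤ) * yy ^ n} : Set _), FreeGroup.lift ![X, Z] c = 1 := by
    rintro _ rfl
    rw [map_mul, map_zpow, map_zpow, lift_xx, lift_yy, zpow_natCast]
    exact hZn
  refine ⟨MonoidHom.toMulEquiv (PresentedGroup.toGroup hf) (PresentedGroup.toGroup hg)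
    (PresentedGroup.ext ?_) (PresentedGroup.ext ?_)⟩
  · simpa [Fin.forall_fin_two, X, Y, x, y] using hZq
  · simpa [Fin.forall_fin_two, X, Y, Z, x, y] using hy

/-- The transvection `x ↦ x * y`, `y ↦ y` of the free group, which turns codings of rotations
into the words `w`. -/
def transvection : FreeGroup (Fin 2) ≃* FreeGroup (Fin 2) :=
  MonoidHom.toMulEquiv (FreeGroup.lift ![xx * yy, yy]) (FreeGroup.lift ![xx * yy⁻¹, yy])
    (by ext i; fin_cases i <;> simp [xx, yy]) (by ext i; fin_cases i <;> simp [xx, yy])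

theorem w_one_eq_transvection (hr : r ≤ p) :
    w p q r 1 = transvection (rotationWord p q r 0 xx yy) := by
  have hx : transvection xx = xx * yy := lift_xx ![xx * yy, yy]
  have hy : transvection yy = yy := lift_yy ![xx * yy, yy]
  rw [map_rotationWord, hx, hy, w]
  refine congrArg List.prod (List.map_congr_left fun j hj => ?_)
  have hp : 0 < p := Nat.zero_lt_of_lt (List.mem_range.1 hj)
  rw [rotationLetter, add_zero]
  obtain rfl | hr := hr.eq_or_lt
  · simp [Nat.mod_lt _ hp, Nat.div_self hp]
  · rw [Nat.mod_eq_of_lt hr, Nat.div_eq_of_lt hr]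
    split_ifs <;> simp

theorem isSF_rotationWord_sub (hpq : p.Coprime q) (hr : r ≤ p)
    (h : IsSF (rotationWord p q r 0 xx yy) a b) :
    IsSF (rotationWord p q (p - r) 0 xx yy) a b := by
  let swap : FreeGroup (Fin 2) ≃* FreeGroup (Fin 2) := FreeGroup.freeGroupCongr (Equiv.swap 0 1)
  have hx : swap xx = yy := by simp [swap, xx, yy]
  have hy : swap yy = xx := by simp [swap, xx, yy]
  have hswap : swap (rotationWord p q r 0 xx yy) = rotationWord p q r 0 yy xx := by
    rw [map_rotationWord, hx, hy]
  rw [← rotationWord_swap hr]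
  exact (hswap ▸ h.map_mulEquiv swap).of_isConj (isConj_rotationWord_zero hpq r)

end SeifertFibered

theorem stmt7_general (p q β : ℕ) (hpq : Nat.Coprime p q) (hq : 1 ≤ q) (hβq : β * q < p) :
    IsSF (w p q (β * q) 1) (β : ℤ) ((p : ℤ) - β * q) ∧
    IsSF (w p q (p - β * q) 1) (β : ℤ) ((p : ℤ) - β * q) := by
  have hword := isSF_rotationWord hpq hq hβq
  rw [w_one_eq_transvection hβq.le, w_one_eq_transvection (Nat.sub_le p (β * q))]
  exact ⟨hword.map_mulEquiv transvection,
    (isSF_rotationWord_sub hpq hβq.le hword).map_mulEquiv transvection⟩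

/-- For coprime `p, q` with `1 ≤ q < p/2` and any `β ≥ 1` with `β q < p`,
both `w_{p,q,βq,1}` and `w_{p,q,p-βq,1}` are `(β, p - βq)` Seifert-fibered. -/
theorem stmt7 (p q β : ℕ) (hpq : Nat.Coprime p q)
    (hq1 : 1 ≤ q) (hq2 : 2 * q < p) (hβ1 : 1 ≤ β) (hβ2 : β * q < p) :
    IsSF (w p q (β * q) 1) (β : ℤ) ((p : ℤ) - β * q) ∧
    IsSF (w p q (p - β * q) 1) (β : ℤ) ((p : ℤ) - β * q) :=
  stmt7_general p q β hpq hq1 hβ2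
end
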